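/- Assume strict feasibility of the primal problem. Then for every ε > 0 there exist step sizes α, β > 0 and T ∈ ℕ such that the VC-LB iterates satisfy fes(q(z(t))) ≤ ε for all t ≥ T. -/

import Mathlib

open Matrix

noncomputable section

/-- Euclidean norm of a vector in ℝ^{4N}, represented as four blocks of ℝ^N. -/
def enorm4 {N : ℕ} (w : Fin 4 → Fin N → ℝ) : ℝ :=
  Real.sqrt (∑ b, ∑ i, w b i ^ 2)

/-- sign(x) = 1 if x ≥ 0 and −1 if x < 0. -/
def sgn (x : ℝ) : ℝ := if 0 ≤ x then 1 else -1

/-- The (linearized) voltage map v(q) = A q + d. -/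
def volt {N : ℕ} (A : Matrix (Fin N) (Fin N) ℝ) (d : Fin N → ℝ) (q : Fin N → ℝ) :
    Fin N → ℝ :=
  A *ᵥ q + d

/-- q(z) = λ^min − λ^max + A⁻¹(μ^min − μ^max). -/
def qOf {N : ℕ} (A : Matrix (Fin N) (Fin N) ℝ) (z : Fin 4 → Fin N → ℝ) : Fin N → ℝ :=
  z 0 - z 1 + A⁻¹ *ᵥ (z 2 - z 3)

/-- ∇D(z) = (v^min − v(q(z)), v(q(z)) − v^max, q^min − q(z), q(z) − q^max). -/
def gradD {N : ℕ} (A : Matrix (Fin N) (Fin N) ℝ) (d vmin vmax qmin qmax : Fin N → ℝ)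
    (z : Fin 4 → Fin N → ℝ) : Fin 4 → Fin N → ℝ :=
  ![vmin - volt A d (qOf A z), volt A d (qOf A z) - vmax,
    qmin - qOf A z, qOf A z - qmax]

/-- V(z) = ‖z − ⌈z + ∇D(z)⌉₊‖. -/
def Vfun {N : ℕ} (A : Matrix (Fin N) (Fin N) ℝ) (d vmin vmax qmin qmax : Fin N → ℝ)
    (z : Fin 4 → Fin N → ℝ) : ℝ :=
  enorm4 (fun b i => z b i - max (z b i + gradD A d vmin vmax qmin qmax z b i) 0)

/-- The Lagrangian dual function
D(z) = inf_q [ (1/2) qᵀAq + (λ^min)ᵀ(v^min − v(q)) + (λ^max)ᵀ(v(q) − v^max)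
  + (μ^min)ᵀ(q^min − q) + (μ^max)ᵀ(q − q^max) ]. -/
def dualFun {N : ℕ} (A : Matrix (Fin N) (Fin N) ℝ) (d vmin vmax qmin qmax : Fin N → ℝ)
    (z : Fin 4 → Fin N → ℝ) : ℝ :=
  ⨅ q : Fin N → ℝ,
    ((1 / 2) * (q ⬝ᵥ A *ᵥ q) + (z 0) ⬝ᵥ (vmin - volt A d q)
      + (z 1) ⬝ᵥ (volt A d q - vmax) + (z 2) ⬝ᵥ (qmin - q) + (z 3) ⬝ᵥ (q - qmax))

/-- fes(q) = Euclidean distance from (q, v(q)) to the box [q^min,q^max] × [v^min,v^max]. -/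
def fes {N : ℕ} (A : Matrix (Fin N) (Fin N) ℝ) (d vmin vmax qmin qmax : Fin N → ℝ)
    (q : Fin N → ℝ) : ℝ :=
  sInf { r : ℝ | ∃ y1 y2 : Fin N → ℝ,
    (∀ i, qmin i ≤ y1 i ∧ y1 i ≤ qmax i) ∧ (∀ i, vmin i ≤ y2 i ∧ y2 i ≤ vmax i) ∧
    r = Real.sqrt ((∑ i, (q i - y1 i) ^ 2) + ∑ i, (volt A d q i - y2 i) ^ 2) }

lemma gradStep_gain_nonneg {L z g : ℝ} (hL : 0 < L) (hz : 0 ≤ z) :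
    0 ≤ g * (max (z + 1 / L * g) 0 - z) - L / 2 * (max (z + 1 / L * g) 0 - z) ^ 2 := by
  obtain ⟨k, rfl⟩ : ∃ k, g = L * k := ⟨g / L, by field_simp⟩
  have e : 1 / L * (L * k) = k := by field_simp
  rw [e]
  rcases le_total 0 (z + k) with h | h
  · rw [max_eq_left h]
    have : 0 ≤ L * k ^ 2 := by positivity
    linarith
  · rw [max_eq_right h]
    have : 0 ≤ L * (z * (-k - z / 2)) := by
      apply mul_nonneg hL.le
      apply mul_nonneg hz
      linarith
    linarith

lemma gradStep_slope_le {L z g w R m b : ℝ} (hL : 0 < L) (hz : 0 ≤ z) (hw : 0 ≤ w)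
    (hzR : z ≤ R) (hwR : w ≤ R) (hb : 0 ≤ b) (hm : 0 ≤ m) (hmb : m ≤ L / 2 * b ^ 2)
    (hgain : g * (max (z + 1 / L * g) 0 - z) - L / 2 * (max (z + 1 / L * g) 0 - z) ^ 2 ≤ m) :
    g * (w - z) ≤ 2 * m + L * b * R := by
  obtain ⟨k, rfl⟩ : ∃ k, g = L * k := ⟨g / L, by field_simp⟩
  have e : 1 / L * (L * k) = k := by field_simp
  rw [e] at hgain
  have hR : 0 ≤ R := hz.trans hzR
  have hLbR : 0 ≤ L * b * R := by positivity
  rcases le_total 0 (z + k) with h | h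
  · rw [max_eq_left h] at hgain
    have hk : k ^ 2 ≤ b ^ 2 := by
      have : L / 2 * k ^ 2 ≤ L / 2 * b ^ 2 := by linarith
      exact le_of_mul_le_mul_left this (by positivity)
    have hkb : |k| ≤ b := abs_le_of_sq_le_sq hk hb
    have hwz : |w - z| ≤ R := abs_le.2 ⟨by linarith, by linarith⟩
    have : k * (w - z) ≤ b * R := by
      calc k * (w - z) ≤ |k * (w - z)| := le_abs_self _
        _ = |k| * |w - z| := abs_mul _ _
        _ ≤ b * R := mul_le_mul hkb hwz (abs_nonneg _) hb
    have := mul_le_mul_of_nonneg_left this hL.le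
    linarith
  · rw [max_eq_right h] at hgain
    have h1 : 0 ≤ L * (z * (-k - z)) :=
      mul_nonneg hL.le (mul_nonneg hz (by linarith))
    have h2 : 0 ≤ L * (w * (-k)) := mul_nonneg hL.le (mul_nonneg hw (by linarith))
    linarith

/-- The displacement of a truncated sign step from a multiple of the step size. -/
lemma signStep_cases {β g : ℝ} (hβ : 0 < β) (k : ℕ) :
    (0 ≤ g ∧ max (k * β + β * sgn g) 0 - k * β = β) ∨
    (g < 0 ∧ β ≤ k * β ∧ max (k * β + β * sgn g) 0 - k * β = -β) ∨
    (g < 0 ∧ k * β = 0 ∧ max (k * β + β * sgn g) 0 - k * β = 0) := by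
  have hk : 0 ≤ (k : ℝ) * β := by positivity
  unfold sgn
  split_ifs with hg
  · left
    refine ⟨hg, ?_⟩
    rw [max_eq_left (by linarith)]; ring
  · right
    rw [not_le] at hg
    rcases Nat.eq_zero_or_pos k with rfl | hpos
    · right
      refine ⟨hg, by simp, ?_⟩
      rw [max_eq_right (by simp; linarith)]; simp
    · left
      have h1 : (1 : ℝ) ≤ k := by exact_mod_cast hpos
      have h2 : β ≤ k * β := by nlinarith
      refine ⟨hg, h2, ?_⟩
      rw [max_eq_left (by linarith)]; ring

lemma signStep_exists_nat {β g : ℝ} (hβ : 0 < β) (k : ℕ) :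
    ∃ k' : ℕ, max (k * β + β * sgn g) 0 = k' * β := by
  rcases signStep_cases (g := g) hβ k with ⟨_, h⟩ | ⟨_, hk, h⟩ | ⟨_, _, h⟩
  · exact ⟨k + 1, by push_cast; linarith⟩
  · have h1 : 1 ≤ k := by
      have : (1 : ℝ) ≤ k := by
        by_contra hlt
        nlinarith
      exact_mod_cast this
    exact ⟨k - 1, by rw [Nat.cast_sub h1]; push_cast; linarith⟩
  · exact ⟨k, by linarith⟩

lemma signStep_gain {β g : ℝ} (hβ : 0 < β) (k : ℕ) :
    0 ≤ g * (max (k * β + β * sgn g) 0 - k * β) ∧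
      (max (k * β + β * sgn g) 0 - k * β) ^ 2 ≤ β ^ 2 := by
  rcases signStep_cases (g := g) hβ k with ⟨hg, h⟩ | ⟨hg, hk, h⟩ | ⟨hg, _, h⟩ <;> rw [h]
  · exact ⟨by positivity, le_rfl⟩
  · exact ⟨by nlinarith, by simp⟩
  · exact ⟨by simp, by nlinarith⟩

lemma signStep_slope_le {β g w R c : ℝ} (hβ : 0 < β) (k : ℕ) (hw : 0 ≤ w)
    (hzR : k * β ≤ R) (hwR : w ≤ R) (hc : 0 ≤ c)
    (hgain : g * (max (k * β + β * sgn g) 0 - k * β) ≤ c * β) :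
    g * (w - k * β) ≤ c * R := by
  have hR : 0 ≤ R := hw.trans hwR
  have hk0 : 0 ≤ (k : ℝ) * β := by positivity
  have hcR : 0 ≤ c * R := mul_nonneg hc hR
  rcases signStep_cases (g := g) hβ k with ⟨hg, h⟩ | ⟨hg, hk, h⟩ | ⟨hg, hk, h⟩ <;>
    rw [h] at hgain
  · have hgc : g ≤ c := le_of_mul_le_mul_right hgain hβ
    calc g * (w - k * β) ≤ g * R := mul_le_mul_of_nonneg_left (by linarith) hg
      _ ≤ c * R := mul_le_mul_of_nonneg_right hgc hR
  · have hgc : -g ≤ c := le_of_mul_le_mul_right (by linarith) hβ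
    calc g * (w - k * β) = -g * (k * β - w) := by ring
      _ ≤ -g * R := mul_le_mul_of_nonneg_left (by linarith) (by linarith)
      _ ≤ c * R := mul_le_mul_of_nonneg_right hgc hR
  · rw [hk]
    nlinarith

section MixedAscent

variable {ι : Type*} [Fintype ι]

/-- One step of projected gradient ascent in the coordinates satisfying `p` and truncated sign
ascent in the others either increases a smooth concave function by a fixed amount, or starts
near the supremum over the orthant and loses at most that amount. -/
lemma mixedAscent_step (D : (ι → ℝ) → ℝ) (g : (ι → ℝ) → ι → ℝ) {L : ℝ} (hL : 0 < L)
    (hup : ∀ z w, D w ≤ D z + ∑ i, g z i * (w i - z i))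
    (hlow : ∀ z w, D z + ∑ i, (g z i * (w i - z i) - L / 2 * (w i - z i) ^ 2) ≤ D w)
    (p : ι → Prop) [DecidablePred p] {R β : ℝ} (hβ : 0 < β) (hβ1 : β ≤ 1)
    (hR : ∀ z : ι → ℝ, (∀ i, 0 ≤ z i) → -1 ≤ D z → ∀ i, z i ≤ R) (hR0 : 0 ≤ R)
    {z z' : ι → ℝ} (hz : ∀ i, 0 ≤ z i) (hzD : -1 ≤ D z)
    (hgrid : ∀ i, ¬ p i → ∃ k : ℕ, z i = k * β)
    (hstep : ∀ i, z' i = max (z i + if p i then 1 / L * g z i else β * sgn (g z i)) 0) :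
    D z + L * Fintype.card ι * β ^ 2 / 2 ≤ D z' ∨
      (D z - L * Fintype.card ι * β ^ 2 / 2 ≤ D z' ∧
        ∀ w : ι → ℝ, (∀ i, 0 ≤ w i) →
          D w ≤ D z + β * (L * (Fintype.card ι : ℝ) ^ 2 * (2 + 3 * R))) := by
  set n : ℝ := (Fintype.card ι : ℝ) with hn
  have hn0 : 0 ≤ n := Nat.cast_nonneg _
  set e : ι → ℝ := fun i => if p i then
    g z i * (z' i - z i) - L / 2 * (z' i - z i) ^ 2 else g z i * (z' i - z i) with he
  have he0 : ∀ i, 0 ≤ e i := by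
    intro i
    simp only [he]
    split_ifs with hp
    · rw [hstep i, if_pos hp]
      exact gradStep_gain_nonneg hL (hz i)
    · obtain ⟨k, hk⟩ := hgrid i hp
      rw [hstep i, if_neg hp, hk]
      exact (signStep_gain hβ k).1
  have hsum : D z + ∑ i, e i - L * n * β ^ 2 / 2 ≤ D z' := by
    refine le_trans ?_ (hlow z z')
    have h1 : ∑ i, (e i - L / 2 * β ^ 2) ≤
        ∑ i, (g z i * (z' i - z i) - L / 2 * (z' i - z i) ^ 2) := by
      refine Finset.sum_le_sum fun i _ => ?_
      simp only [he]
      split_ifs with hp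
      · have : 0 ≤ L / 2 * β ^ 2 := by positivity
        linarith
      · obtain ⟨k, hk⟩ := hgrid i hp
        have h2 : (z' i - z i) ^ 2 ≤ β ^ 2 := by
          rw [hstep i, if_neg hp, hk]
          exact (signStep_gain hβ k).2
        have : L / 2 * (z' i - z i) ^ 2 ≤ L / 2 * β ^ 2 :=
          mul_le_mul_of_nonneg_left h2 (by positivity)
        linarith
    rw [Finset.sum_sub_distrib, Finset.sum_const, Finset.card_univ, nsmul_eq_mul, ← hn] at h1
    linarith
  have hesum : 0 ≤ ∑ i, e i := Finset.sum_nonneg fun i _ => he0 i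
  by_cases hbig : L * n * β ^ 2 ≤ ∑ i, e i
  · left; linarith
  right
  refine ⟨by linarith, fun w hw => ?_⟩
  have hC : 0 ≤ β * (L * n ^ 2 * (2 + 3 * R)) := by positivity
  by_cases hwD : -1 ≤ D w
  swap
  · linarith
  have hei : ∀ i, e i ≤ L * n * β ^ 2 := fun i =>
    (Finset.single_le_sum (fun j _ => he0 j) (Finset.mem_univ i)).trans (not_le.1 hbig).le
  have hslope : ∀ i, g z i * (w i - z i) ≤ β * (L * n * (2 + 3 * R)) := by
    intro i
    have hn1 : 1 ≤ n := by
      have : 0 < Fintype.card ι := Fintype.card_pos_iff.2 ⟨i⟩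
      rw [hn]; exact_mod_cast this
    have hLn : 0 ≤ L * n := by positivity
    have h3 := hei i
    simp only [he] at h3
    split_ifs at h3 with hp
    · rw [hstep i, if_pos hp] at h3
      have h4 := gradStep_slope_le (w := w i) (R := R) (b := 2 * n * β) hL (hz i) (hw i)
        (hR z hz hzD i) (hR w hw hwD i) (by positivity) (by positivity)
        (by
          have : n * (L * β ^ 2) ≤ (2 * n ^ 2) * (L * β ^ 2) :=
            mul_le_mul_of_nonneg_right (by nlinarith) (by positivity)
          linarith) h3
      have h5 : L * n * β ^ 2 ≤ L * n * β := mul_le_mul_of_nonneg_left (by nlinarith) hLn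
      have h6 : 0 ≤ L * n * β * R := by positivity
      linarith
    · obtain ⟨k, hk⟩ := hgrid i hp
      have hzR := hR z hz hzD i
      rw [hstep i, if_neg hp, hk] at h3
      rw [hk] at hzR ⊢
      have h4 := signStep_slope_le (g := g z i) (c := L * n * β) hβ k (hw i) hzR (hR w hw hwD i)
        (by positivity) (by linarith)
      have h5 : 0 ≤ L * n * β * R := by positivity
      have h6 : 0 ≤ L * n * β := by positivity
      linarith
  have h7 := Finset.sum_le_sum fun i (_ : i ∈ Finset.univ) => hslope i
  rw [Finset.sum_const, Finset.card_univ, nsmul_eq_mul, ← hn] at h7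
  have := hup z w
  linarith

/-- A point of the orthant that is nearly maximal for a smooth function has nearly nonpositive
gradient. -/
lemma sq_grad_le_of_near_max (D : (ι → ℝ) → ℝ) (g : (ι → ℝ) → ι → ℝ) {L : ℝ} (hL : 0 < L)
    (hlow : ∀ z w, D z + ∑ i, (g z i * (w i - z i) - L / 2 * (w i - z i) ^ 2) ≤ D w)
    {z : ι → ℝ} (hz : ∀ i, 0 ≤ z i) {κ : ℝ}
    (hκ : ∀ w : ι → ℝ, (∀ i, 0 ≤ w i) → D w ≤ D z + κ) {i : ι} (hi : 0 ≤ g z i) :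
    g z i ^ 2 ≤ 2 * L * κ := by
  classical
  have hg : 0 ≤ g z i / L := by positivity
  have h1 := hκ (z + Pi.single i (g z i / L)) (by
    intro j
    refine add_nonneg (hz j) ?_
    rcases eq_or_ne j i with rfl | hj
    · simpa using hg
    · simp [hj])
  have h2 := hlow z (z + Pi.single i (g z i / L))
  rw [Finset.sum_eq_single i (by intro j _ hj; simp [hj]) (by simp)] at h2
  simp only [Pi.add_apply, Pi.single_eq_same, add_sub_cancel_left] at h2
  have h3 : g z i * (g z i / L) - L / 2 * (g z i / L) ^ 2 = g z i ^ 2 / (2 * L) := by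
    field_simp; ring
  rw [h3] at h2
  have h4 : g z i ^ 2 / (2 * L) ≤ κ := by linarith
  rw [div_le_iff₀ (by positivity)] at h4
  linarith

theorem mixedAscent_eventually_grad_le [Nonempty ι]
    (D : (ι → ℝ) → ℝ) (g : (ι → ℝ) → ι → ℝ) {L : ℝ} (hL : 0 < L)
    (hup : ∀ z w, D w ≤ D z + ∑ i, g z i * (w i - z i))
    (hlow : ∀ z w, D z + ∑ i, (g z i * (w i - z i) - L / 2 * (w i - z i) ^ 2) ≤ D w)
    (h0 : D 0 = 0) {P s : ℝ} (hs : 0 < s)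
    (hcoer : ∀ z : ι → ℝ, (∀ i, 0 ≤ z i) → D z ≤ P - s * ∑ i, z i)
    (p : ι → Prop) [DecidablePred p] {η : ℝ} (hη : 0 < η) :
    ∃ α β : ℝ, 0 < α ∧ 0 < β ∧ ∃ T : ℕ, ∀ z : ℕ → ι → ℝ, z 0 = 0 →
      (∀ t i, z (t + 1) i =
        max (z t i + if p i then α * g (z t) i else β * sgn (g (z t) i)) 0) →
      ∀ t, T ≤ t → ∀ i, g (z t) i ≤ η := by
  have hP : 0 ≤ P := by simpa [h0] using hcoer 0 (fun _ => le_rfl)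
  set R := (P + 1) / s with hRdef
  have hR0 : 0 ≤ R := by positivity
  have hR : ∀ z : ι → ℝ, (∀ i, 0 ≤ z i) → -1 ≤ D z → ∀ i, z i ≤ R := by
    intro z hz hzD i
    rw [hRdef, le_div_iff₀ hs]
    have h1 : z i ≤ ∑ j, z j := Finset.single_le_sum (fun j _ => hz j) (Finset.mem_univ i)
    have h2 := mul_le_mul_of_nonneg_left h1 hs.le
    have := hcoer z hz
    linarith
  set n : ℝ := (Fintype.card ι : ℝ) with hn
  have hn1 : 1 ≤ n := by
    rw [hn]; exact_mod_cast (Fintype.card_pos : 0 < Fintype.card ι)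
  set C := L * n ^ 2 * (3 + 3 * R) with hC
  have hC0 : 0 < C := by positivity
  obtain ⟨β, hβ, hβ1, hβC, hβη⟩ : ∃ β : ℝ, 0 < β ∧ β ≤ 1 ∧ β * C ≤ 1 ∧
      2 * L * (β * C) ≤ η ^ 2 := by
    refine ⟨min 1 (min (1 / C) (η ^ 2 / (2 * L * C))), by positivity, min_le_left _ _, ?_, ?_⟩
    · rw [← le_div_iff₀ hC0]
      exact (min_le_right _ _).trans (min_le_left _ _)
    · have : min 1 (min (1 / C) (η ^ 2 / (2 * L * C))) ≤ η ^ 2 / (2 * L * C) :=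
        (min_le_right _ _).trans (min_le_right _ _)
      rw [le_div_iff₀ (by positivity)] at this
      linarith
  set c := L * n * β ^ 2 / 2 with hc
  have hc0 : 0 < c := by positivity
  have hcκ : β * (L * n ^ 2 * (2 + 3 * R)) + c ≤ β * C := by
    have h1 : n * β ^ 2 / 2 ≤ n ^ 2 * β := by
      have h2 : n * β ^ 2 ≤ n * β := mul_le_mul_of_nonneg_left (by nlinarith) (by positivity)
      have h3 : n * β ≤ n ^ 2 * β := mul_le_mul_of_nonneg_right (by nlinarith) hβ.le
      have h4 : 0 ≤ n * β ^ 2 := by positivity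
      linarith
    have := mul_le_mul_of_nonneg_left h1 hL.le
    rw [hC, hc]
    linarith
  obtain ⟨T, hT⟩ := exists_nat_gt (P / c)
  refine ⟨1 / L, β, by positivity, hβ, T, fun z hz0 hz t ht i => ?_⟩
  have hnonneg : ∀ t i, 0 ≤ z t i := by
    intro t i
    cases t with
    | zero => simp [hz0]
    | succ t => rw [hz]; exact le_max_right _ _
  have hgrid : ∀ t i, ¬ p i → ∃ k : ℕ, z t i = k * β := by
    intro t i hp
    induction t with
    | zero => exact ⟨0, by simp [hz0]⟩
    | succ t ih =>
      obtain ⟨k, hk⟩ := ih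
      rw [hz, if_neg hp, hk]
      exact signStep_exists_nat hβ k
  have hinv : ∀ t : ℕ, t * c ≤ D (z t) ∨
      ∀ w : ι → ℝ, (∀ i, 0 ≤ w i) → D w ≤ D (z t) + β * C := by
    intro t
    induction t with
    | zero => left; simp [hz0, h0]
    | succ t ih =>
      have hD : -1 ≤ D (z t) := by
        rcases ih with h | h
        · have : 0 ≤ t * c := by positivity
          linarith
        · have := h 0 (fun _ => le_rfl)
          linarith
      rcases mixedAscent_step D g hL hup hlow p hβ hβ1 hR hR0 (hnonneg t) hD (hgrid t) (hz t)
        with h | ⟨h, hw⟩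
      · rw [← hn, ← hc] at h
        rcases ih with h' | h'
        · left; push_cast; linarith
        · right; intro w hw; linarith [h' w hw]
      · rw [← hn, ← hc] at h
        right
        intro w hw'
        have := hw w hw'
        rw [← hn] at this
        linarith
  have hnear : ∀ w : ι → ℝ, (∀ i, 0 ≤ w i) → D w ≤ D (z t) + β * C := by
    refine (hinv t).resolve_left fun h => ?_
    rw [div_lt_iff₀ hc0] at hT
    have h1 : (T : ℝ) * c ≤ t * c :=
      mul_le_mul_of_nonneg_right (by exact_mod_cast ht) hc0.le
    have h2 := hcoer (z t) (hnonneg t)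
    have h3 : 0 ≤ s * ∑ i, z t i :=
      mul_nonneg hs.le (Finset.sum_nonneg fun i _ => hnonneg t i)
    linarith
  by_contra! hlt
  have := sq_grad_le_of_near_max D g hL hlow (hnonneg t) hnear (hη.le.trans hlt.le)
  nlinarith

end MixedAscent

section Dual

variable {N : ℕ}

/-- The constraint functions of the primal problem, in the form `constraint ≤ 0`. -/
def primalCon (A : Matrix (Fin N) (Fin N) ℝ) (d vmin vmax qmin qmax : Fin N → ℝ)
    (q : Fin N → ℝ) : Fin 4 → Fin N → ℝ :=
  ![vmin - volt A d q, volt A d q - vmax, qmin - q, q - qmax]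

/-- The closed form of the dual function. -/
def dualQuad (A : Matrix (Fin N) (Fin N) ℝ) (d vmin vmax qmin qmax : Fin N → ℝ)
    (z : Fin 4 → Fin N → ℝ) : ℝ :=
  ∑ b, ∑ i, primalCon A d vmin vmax qmin qmax 0 b i * z b i
    - 1 / 2 * (qOf A z ⬝ᵥ A *ᵥ qOf A z)

lemma qOf_sub (A : Matrix (Fin N) (Fin N) ℝ) (w z : Fin 4 → Fin N → ℝ) :
    qOf A (w - z) = qOf A w - qOf A z := by
  have h : (w - z) 2 - (w - z) 3 = (w 2 - w 3) - (z 2 - z 3) := by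
    simp only [Pi.sub_apply]; abel
  unfold qOf
  rw [h, Matrix.mulVec_sub]
  simp only [Pi.sub_apply]
  abel

lemma qOf_zero (A : Matrix (Fin N) (Fin N) ℝ) : qOf A 0 = 0 := by
  simp [qOf]

lemma dotProduct_mulVec_comm_of_posDef {A : Matrix (Fin N) (Fin N) ℝ} (hA : A.PosDef)
    (x y : Fin N → ℝ) : x ⬝ᵥ A *ᵥ y = y ⬝ᵥ A *ᵥ x := by
  have hT : Aᵀ = A := by simpa using hA.isHermitian.eq
  rw [Matrix.dotProduct_mulVec, ← Matrix.mulVec_transpose, hT, dotProduct_comm]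

lemma dotProduct_mulVec_self_nonneg {A : Matrix (Fin N) (Fin N) ℝ} (hA : A.PosDef)
    (x : Fin N → ℝ) : 0 ≤ x ⬝ᵥ A *ᵥ x := by
  simpa using hA.posSemidef.dotProduct_mulVec_nonneg x

lemma mulVec_qOf {A : Matrix (Fin N) (Fin N) ℝ} (hA : A.PosDef) (z : Fin 4 → Fin N → ℝ) :
    A *ᵥ qOf A z = A *ᵥ (z 0 - z 1) + (z 2 - z 3) := by
  have hdet : IsUnit A.det := (Matrix.isUnit_iff_isUnit_det A).1 hA.isUnit
  rw [qOf, Matrix.mulVec_add, Matrix.mulVec_mulVec, Matrix.mul_nonsing_inv A hdet,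
    Matrix.one_mulVec]

lemma sum_primalCon_mul {A : Matrix (Fin N) (Fin N) ℝ} (hA : A.PosDef)
    (d vmin vmax qmin qmax q : Fin N → ℝ) (u : Fin 4 → Fin N → ℝ) :
    ∑ b, ∑ i, primalCon A d vmin vmax qmin qmax q b i * u b i =
      ∑ b, ∑ i, primalCon A d vmin vmax qmin qmax 0 b i * u b i - qOf A u ⬝ᵥ A *ᵥ q := by
  have h1 : qOf A u ⬝ᵥ A *ᵥ q = ∑ i, ((A *ᵥ q) i * (u 0 i - u 1 i) + q i * (u 2 i - u 3 i)) := by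
    rw [dotProduct_mulVec_comm_of_posDef hA, mulVec_qOf hA, dotProduct_add,
      dotProduct_mulVec_comm_of_posDef hA, dotProduct_comm (u 0 - u 1)]
    simp only [dotProduct, ← Finset.sum_add_distrib, Pi.sub_apply]
  rw [h1]
  simp only [Fin.sum_univ_four, ← Finset.sum_add_distrib, ← Finset.sum_sub_distrib]
  refine Finset.sum_congr rfl fun i _ => ?_
  simp [primalCon, volt]
  ring

lemma dualQuad_sub {A : Matrix (Fin N) (Fin N) ℝ} (hA : A.PosDef)
    (d vmin vmax qmin qmax : Fin N → ℝ) (z w : Fin 4 → Fin N → ℝ) :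
    dualQuad A d vmin vmax qmin qmax w = dualQuad A d vmin vmax qmin qmax z
      + ∑ b, ∑ i, gradD A d vmin vmax qmin qmax z b i * (w b i - z b i)
      - 1 / 2 * (qOf A (w - z) ⬝ᵥ A *ᵥ qOf A (w - z)) := by
  have h := sum_primalCon_mul hA d vmin vmax qmin qmax (qOf A z) (w - z)
  have hlin : ∑ b, ∑ i, primalCon A d vmin vmax qmin qmax 0 b i * (w - z) b i =
      ∑ b, ∑ i, primalCon A d vmin vmax qmin qmax 0 b i * w b i
        - ∑ b, ∑ i, primalCon A d vmin vmax qmin qmax 0 b i * z b i := by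
    simp only [← Finset.sum_sub_distrib, Pi.sub_apply, mul_sub]
  rw [hlin] at h
  change ∑ b, ∑ i, gradD A d vmin vmax qmin qmax z b i * (w b i - z b i) = _ at h
  rw [h, qOf_sub]
  simp only [dualQuad, Matrix.mulVec_sub, dotProduct_sub, sub_dotProduct]
  rw [dotProduct_mulVec_comm_of_posDef hA (qOf A z) (qOf A w)]
  ring

lemma dualQuad_le_lagrangian {A : Matrix (Fin N) (Fin N) ℝ} (hA : A.PosDef)
    (d vmin vmax qmin qmax q : Fin N → ℝ) (z : Fin 4 → Fin N → ℝ) :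
    dualQuad A d vmin vmax qmin qmax z ≤ 1 / 2 * (q ⬝ᵥ A *ᵥ q)
      + ∑ b, ∑ i, primalCon A d vmin vmax qmin qmax q b i * z b i := by
  have h := dotProduct_mulVec_self_nonneg hA (q - qOf A z)
  simp only [Matrix.mulVec_sub, dotProduct_sub, sub_dotProduct] at h
  rw [dotProduct_mulVec_comm_of_posDef hA q (qOf A z)] at h
  rw [sum_primalCon_mul hA, dualQuad]
  linarith

lemma exists_qOf_quadratic_le (A : Matrix (Fin N) (Fin N) ℝ) :
    ∃ L : ℝ, 0 < L ∧ ∀ u : Fin 4 → Fin N → ℝ,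
      qOf A u ⬝ᵥ A *ᵥ qOf A u ≤ L * ∑ b, ∑ i, u b i ^ 2 := by
  let π : Fin 4 → (Fin 4 → Fin N → ℝ) →ₗ[ℝ] (Fin N → ℝ) := fun b => LinearMap.proj b
  let Q := π 0 - π 1 + A⁻¹.mulVecLin ∘ₗ (π 2 - π 3)
  have hQ : ∀ u, LinearMap.toContinuousLinearMap Q u = qOf A u := fun u => rfl
  let M := LinearMap.toContinuousLinearMap A.mulVecLin
  refine ⟨N * ‖M‖ * ‖LinearMap.toContinuousLinearMap Q‖ ^ 2 + 1, by positivity, fun u => ?_⟩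
  have hsq : ‖u‖ ^ 2 ≤ ∑ b, ∑ i, u b i ^ 2 := by
    have hS : 0 ≤ ∑ b, ∑ i, u b i ^ 2 := by positivity
    have : ‖u‖ ≤ Real.sqrt (∑ b, ∑ i, u b i ^ 2) := by
      refine (pi_norm_le_iff_of_nonneg (Real.sqrt_nonneg _)).2 fun b =>
        (pi_norm_le_iff_of_nonneg (Real.sqrt_nonneg _)).2 fun i => ?_
      refine Real.abs_le_sqrt ?_
      calc u b i ^ 2 ≤ ∑ j, u b j ^ 2 :=
            Finset.single_le_sum (f := fun j => u b j ^ 2) (fun j _ => sq_nonneg _)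
              (Finset.mem_univ i)
        _ ≤ _ := Finset.single_le_sum (f := fun b => ∑ j, u b j ^ 2)
              (fun b _ => Finset.sum_nonneg fun j _ => sq_nonneg _) (Finset.mem_univ b)
    calc ‖u‖ ^ 2 ≤ Real.sqrt (∑ b, ∑ i, u b i ^ 2) ^ 2 := by gcongr
      _ = _ := Real.sq_sqrt hS
  have hx : ‖qOf A u‖ ≤ ‖LinearMap.toContinuousLinearMap Q‖ * ‖u‖ := by
    rw [← hQ]; exact ContinuousLinearMap.le_opNorm _ _
  have hAx : ‖A *ᵥ qOf A u‖ ≤ ‖M‖ * ‖qOf A u‖ := M.le_opNorm _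
  have hdot : qOf A u ⬝ᵥ A *ᵥ qOf A u ≤ N * (‖qOf A u‖ * ‖A *ᵥ qOf A u‖) := by
    have : ∀ i ∈ Finset.univ, qOf A u i * (A *ᵥ qOf A u) i ≤ ‖qOf A u‖ * ‖A *ᵥ qOf A u‖ := by
      intro i _
      calc _ ≤ |qOf A u i * (A *ᵥ qOf A u) i| := le_abs_self _
        _ = ‖qOf A u i‖ * ‖(A *ᵥ qOf A u) i‖ := abs_mul _ _
        _ ≤ _ := mul_le_mul (norm_le_pi_norm _ i) (norm_le_pi_norm _ i) (norm_nonneg _)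
          (norm_nonneg _)
    simpa [dotProduct] using Finset.sum_le_sum this
  calc qOf A u ⬝ᵥ A *ᵥ qOf A u ≤ N * (‖qOf A u‖ * ‖A *ᵥ qOf A u‖) := hdot
    _ ≤ N * (‖qOf A u‖ * (‖M‖ * ‖qOf A u‖)) := by gcongr
    _ = N * ‖M‖ * ‖qOf A u‖ ^ 2 := by ring
    _ ≤ N * ‖M‖ * (‖LinearMap.toContinuousLinearMap Q‖ * ‖u‖) ^ 2 := by gcongr
    _ = N * ‖M‖ * ‖LinearMap.toContinuousLinearMap Q‖ ^ 2 * ‖u‖ ^ 2 := by ring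
    _ ≤ (N * ‖M‖ * ‖LinearMap.toContinuousLinearMap Q‖ ^ 2 + 1) * ‖u‖ ^ 2 := by
        gcongr; linarith
    _ ≤ _ := by gcongr

lemma sq_sub_clamp_le {x lo hi η : ℝ} (hη : 0 ≤ η) (h1 : lo - x ≤ η)
    (h2 : x - hi ≤ η) : (x - max lo (min x hi)) ^ 2 ≤ η ^ 2 := by
  refine sq_le_sq' ?_ ?_
  · have : max lo (min x hi) ≤ x + η := max_le (by linarith) ((min_le_left _ _).trans (by linarith))
    linarith
  · have : x - η ≤ max lo (min x hi) := le_max_of_le_right (le_min (by linarith) (by linarith))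
    linarith

lemma fes_le_of_primalCon_le (A : Matrix (Fin N) (Fin N) ℝ)
    {d vmin vmax qmin qmax q : Fin N → ℝ} (hv : ∀ i, vmin i ≤ vmax i)
    (hq : ∀ i, qmin i ≤ qmax i) {η : ℝ} (hη : 0 ≤ η)
    (h : ∀ b i, primalCon A d vmin vmax qmin qmax q b i ≤ η) :
    fes A d vmin vmax qmin qmax q ≤ Real.sqrt (2 * N * η ^ 2) := by
  have hmem : fes A d vmin vmax qmin qmax q ≤ Real.sqrt
      ((∑ i, (q i - max (qmin i) (min (q i) (qmax i))) ^ 2) +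
        ∑ i, (volt A d q i - max (vmin i) (min (volt A d q i) (vmax i))) ^ 2) := by
    refine csInf_le ⟨0, ?_⟩ ⟨fun i => max (qmin i) (min (q i) (qmax i)),
      fun i => max (vmin i) (min (volt A d q i) (vmax i)),
      fun i => ⟨le_max_left _ _, max_le (hq i) (min_le_right _ _)⟩,
      fun i => ⟨le_max_left _ _, max_le (hv i) (min_le_right _ _)⟩, rfl⟩
    rintro r ⟨y1, y2, -, -, rfl⟩
    exact Real.sqrt_nonneg _
  refine hmem.trans (Real.sqrt_le_sqrt ?_)
  have e1 : ∑ i, (q i - max (qmin i) (min (q i) (qmax i))) ^ 2 ≤ ∑ _i : Fin N, η ^ 2 :=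
    Finset.sum_le_sum fun i _ => sq_sub_clamp_le hη (h 2 i) (h 3 i)
  have e2 : ∑ i, (volt A d q i - max (vmin i) (min (volt A d q i) (vmax i))) ^ 2 ≤
      ∑ _i : Fin N, η ^ 2 :=
    Finset.sum_le_sum fun i _ => sq_sub_clamp_le hη (h 0 i) (h 1 i)
  simp only [Finset.sum_const, Finset.card_univ, Fintype.card_fin, nsmul_eq_mul] at e1 e2
  linarith

/-- A strictly feasible point has a uniform margin in all constraints. -/
lemma exists_primalCon_margin {A : Matrix (Fin N) (Fin N) ℝ} {d vmin vmax qmin qmax q : Fin N → ℝ}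
    (hq : ∀ i, qmin i < q i ∧ q i < qmax i)
    (hv : ∀ i, vmin i < volt A d q i ∧ volt A d q i < vmax i) :
    ∃ s : ℝ, 0 < s ∧ ∀ b i, primalCon A d vmin vmax qmin qmax q b i ≤ -s := by
  have hneg : ∀ x : Fin 4 × Fin N, 0 < -primalCon A d vmin vmax qmin qmax q x.1 x.2 := by
    rintro ⟨b, i⟩
    have h1 := hq i
    have h2 := hv i
    fin_cases b <;> simp [primalCon, h1, h2]
  rcases isEmpty_or_nonempty (Fin 4 × Fin N) with hE | hE
  · exact ⟨1, one_pos, fun b i => (hE.false (b, i)).elim⟩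
  · obtain ⟨x, hx⟩ := Finite.exists_min
      fun x : Fin 4 × Fin N => -primalCon A d vmin vmax qmin qmax q x.1 x.2
    exact ⟨_, hneg x, fun b i => by linarith [hx (b, i)]⟩

end Dual

/-- Theorem 2: under strict feasibility of the primal problem, for every ε > 0 there are
step sizes α, β > 0 and a time T such that the VC-LB iterates satisfy
fes(q(z(t))) ≤ ε for all t ≥ T. -/
theorem stmt_11 (N : ℕ) (hN : 0 < N) (A : Matrix (Fin N) (Fin N) ℝ) (hA : A.PosDef)
    (d vmin vmax qmin qmax : Fin N → ℝ)
    (hv : ∀ i, vmin i ≤ vmax i) (hq : ∀ i, qmin i ≤ qmax i)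
    (hstrict : ∃ q : Fin N → ℝ, (∀ i, qmin i < q i ∧ q i < qmax i) ∧
      ∀ i, vmin i < volt A d q i ∧ volt A d q i < vmax i) :
    ∀ ε : ℝ, 0 < ε →
      ∃ α β : ℝ, 0 < α ∧ 0 < β ∧
        ∃ T : ℕ, ∀ ziter : ℕ → Fin 4 → Fin N → ℝ,
          ziter 0 = 0 →
          (∀ t b i, ziter (t + 1) b i =
            max (ziter t b i
              + (if (b : ℕ) < 2 then α * gradD A d vmin vmax qmin qmax (ziter t) b i
                else β * sgn (gradD A d vmin vmax qmin qmax (ziter t) b i))) 0) →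
          ∀ t, T ≤ t → fes A d vmin vmax qmin qmax (qOf A (ziter t)) ≤ ε := by
  intro ε hε
  obtain ⟨q, hqs, hvs⟩ := hstrict
  obtain ⟨s, hs, hmargin⟩ := exists_primalCon_margin hqs hvs
  obtain ⟨L, hL, hquad⟩ := exists_qOf_quadratic_le A
  have hNpos : (1 : ℝ) ≤ N := by exact_mod_cast hN
  have : Nonempty (Fin 4 × Fin N) := ⟨(0, ⟨0, hN⟩)⟩
  have key := mixedAscent_eventually_grad_le (ι := Fin 4 × Fin N)
    (fun u => dualQuad A d vmin vmax qmin qmax (Function.curry u))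
    (fun u x => gradD A d vmin vmax qmin qmax (Function.curry u) x.1 x.2) hL
    (fun z w => by
      rw [dualQuad_sub hA d vmin vmax qmin qmax (Function.curry z), Fintype.sum_prod_type]
      have := dotProduct_mulVec_self_nonneg hA (qOf A (Function.curry w - Function.curry z))
      simp only [Function.curry_apply]
      linarith)
    (fun z w => by
      rw [dualQuad_sub hA d vmin vmax qmin qmax (Function.curry z) (Function.curry w),
        Finset.sum_sub_distrib, Fintype.sum_prod_type, Fintype.sum_prod_type]
      have := hquad (Function.curry w - Function.curry z)
      simp only [Function.curry_apply, Pi.sub_apply, ← Finset.mul_sum] at this ⊢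
      linarith)
    (by
      have : Function.curry (0 : Fin 4 × Fin N → ℝ) = 0 := rfl
      simp only [this]
      simp [dualQuad, qOf_zero])
    (P := 1 / 2 * (q ⬝ᵥ A *ᵥ q)) hs
    (fun z hz => by
      refine (dualQuad_le_lagrangian hA d vmin vmax qmin qmax q _).trans ?_
      have : ∑ b, ∑ i, primalCon A d vmin vmax qmin qmax q b i * Function.curry z b i ≤
          ∑ b, ∑ i, -s * z (b, i) :=
        Finset.sum_le_sum fun b _ => Finset.sum_le_sum fun i _ =>
          mul_le_mul_of_nonneg_right (hmargin b i) (hz (b, i))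
      simp only [← Finset.mul_sum] at this
      rw [Fintype.sum_prod_type]
      linarith)
    (fun x => (x.1 : ℕ) < 2) (η := ε / (2 * N)) (by positivity)
  obtain ⟨α, β, hα, hβ, T, hT⟩ := key
  refine ⟨α, β, hα, hβ, T, fun ziter h0 hstep t ht => ?_⟩
  have hgrad := hT (fun t => Function.uncurry (ziter t)) (by simp only [h0]; rfl)
    (fun t x => hstep t x.1 x.2) t ht
  refine (fes_le_of_primalCon_le A hv hq (η := ε / (2 * N)) (by positivity)
    fun b i => hgrad (b, i)).trans ?_
  rw [Real.sqrt_le_left hε.le]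
  have : 2 * (N : ℝ) * (ε / (2 * N)) ^ 2 = ε ^ 2 / (2 * N) := by field_simp
  rw [this]
  exact div_le_self (by positivity) (by linarith)

end
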